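/- arXiv:math/0206211 — 2 statements merged into one kernel-verified Lean document; each statement's English description precedes it below -/
import Mathlib

section
/- Let R be a division ring, A a generic n×n matrix over R, and let π : Rˣ → Rˣ/[Rˣ,Rˣ] be the canonical map onto the abelianization of the group of units of R. For any orderings I = (i₁,…,i_n) and J = (j₁,…,j_n) of {1,…,n}, the element D_{I,J}(A) is an invertible element of R and π(D_{I,J}(A)) = π(p(I) p(J)) · π(Δ(A)), where p(I), p(J) ∈ {1, −1} ⊂ R are the signs of the permutations I and J. -/
/-!
The proof compares `D_{I,J}` before and after exchanging two consecutive entries of one of the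
orderings. Such an exchange affects only two consecutive factors `|M|_{ij} |M^{ij}|_{kl}`, and the
homological relations `|M|_{ij}⁻¹ |M^{kj}|_{il} = -|M|_{kj}⁻¹ |M^{ij}|_{kl}`
(`Generic.homological_row`) and their mirror images (`Generic.homological_col`) say that modulo
commutators the product of these factors is multiplied by `-1`. As adjacent transpositions
generate the symmetric group, each ordering contributes exactly its sign.

The homological relation rests on a description of quasideterminants by row vectors
(`row_mul_qdet`): if `x M` vanishes outside column `j`, then `(x M)_j = x_i |M|_{ij}` for every
row `i`. Applied to the rows of the inverse matrix, it also shows that all the factors of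
`D_{I,J}(A)` are nonzero. The version for columns is the version for rows applied to the transpose
over the opposite ring.

To compute modulo commutators, the map `π` is extended by `0 ↦ 0` to a homomorphism `abMap` from
the whole division ring to the abelianization with a zero adjoined.
-/

open Matrix

variable {R : Type*} [Ring R]

/-- The submatrix of `A` obtained by deleting row `i` and column `j`,
with rows and columns retaining their original labels. -/
def delSub {I J : Type*} (A : Matrix I J R) (i : I) (j : J) :
    Matrix {p : I // p ≠ i} {q : J // q ≠ j} R :=
  A.submatrix Subtype.val Subtype.val

/-- A (possibly rectangular-typed) matrix is invertible if it has a two-sided inverse. -/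
def HasTwoSidedInv {I J : Type*} [Fintype I] [Fintype J] [DecidableEq I] [DecidableEq J]
    (M : Matrix I J R) : Prop :=
  ∃ B : Matrix J I R, M * B = 1 ∧ B * M = 1

/-- The quasideterminant `|A|_{ij}` is defined iff `A^{ij}` is invertible. -/
def QdetDefined {I J : Type*} [Fintype I] [Fintype J] [DecidableEq I] [DecidableEq J]
    (A : Matrix I J R) (i : I) (j : J) : Prop :=
  HasTwoSidedInv (delSub A i j)

/- The quasideterminant `|A|_{ij} = a_{ij} - r_i^j (A^{ij})⁻¹ c_j^i` (junk value `0`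
if `A^{ij}` is not invertible). -/
open Classical in
noncomputable def qdet {I J : Type*} [Fintype I] [Fintype J] [DecidableEq I] [DecidableEq J]
    (A : Matrix I J R) (i : I) (j : J) : R :=
  if h : QdetDefined A i j then
    A i j - ∑ p : {p : I // p ≠ i}, ∑ q : {q : J // q ≠ j},
      A i q.val * (Exists.choose h) q p * A p.val j
  else 0

/-- A square matrix is generic if all of its square submatrices (including itself)
are invertible. -/
def Generic {n : ℕ} (A : Matrix (Fin n) (Fin n) R) : Prop :=
  ∀ S T : Finset (Fin n), S.card = T.card →
    HasTwoSidedInv (A.submatrix (Subtype.val : {p : Fin n // p ∈ S} → Fin n)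
      (Subtype.val : {q : Fin n // q ∈ T} → Fin n))

/- `D_{I,J}(A) = |A|_{i₁j₁} |A^{i₁j₁}|_{i₂j₂} ⋯ a_{i_n j_n}`, where `I = (σ 1, …, σ n)`
and `J = (τ 1, …, τ n)`; at step `k`, the quasideterminant of the submatrix of `A`
obtained by deleting rows `i₁,…,i_{k−1}` and columns `j₁,…,j_{k−1}` is taken at
position `(i_k, j_k)`. -/
noncomputable def DIJ {R : Type*} [Ring R] {n : ℕ} (A : Matrix (Fin n) (Fin n) R)
    (σ τ : Equiv.Perm (Fin n)) : R :=
  ((List.finRange n).map (fun k =>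
    qdet (A.submatrix (Subtype.val : {p : Fin n // k ≤ σ.symm p} → Fin n)
      (Subtype.val : {q : Fin n // k ≤ τ.symm q} → Fin n))
      ⟨σ k, by simp⟩ ⟨τ k, by simp⟩)).prod

/-- The basic predeterminant `Δ(A) = D_{(1,…,n),(1,…,n)}(A)`. -/
noncomputable def Delta {R : Type*} [Ring R] {n : ℕ} (A : Matrix (Fin n) (Fin n) R) : R :=
  DIJ A (Equiv.refl (Fin n)) (Equiv.refl (Fin n))

/-! ### Transposition to the opposite ring -/

open MulOpposite in
/-- The transpose of a matrix, read over the opposite ring; it exchanges the roles of rows and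
columns in the theory of quasideterminants. -/
def opT {I J : Type*} (A : Matrix I J R) : Matrix J I Rᵐᵒᵖ := fun q p => op (A p q)

lemma opT_mul {I J K : Type*} [Fintype J] (A : Matrix I J R) (B : Matrix J K R) :
    opT (A * B) = opT B * opT A := by
  ext k i
  simp [opT, Matrix.mul_apply]

lemma opT_one {I : Type*} [DecidableEq I] : opT (1 : Matrix I I R) = 1 := by
  ext a b
  by_cases h : a = b
  · subst h; simp [opT]
  · simp [opT, Matrix.one_apply_ne h, Matrix.one_apply_ne (Ne.symm h)]

/-! ### Quasideterminants over a ring -/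

section General

variable {I J : Type*} [Fintype I] [Fintype J] [DecidableEq I] [DecidableEq J]

/-- Any two-sided inverse of `A^{ij}`, not only the chosen one, computes `|A|_{ij}`. -/
lemma qdet_eq_of_inv (A : Matrix I J R) (i : I) (j : J)
    (B : Matrix {q : J // q ≠ j} {p : I // p ≠ i} R)
    (h₁ : delSub A i j * B = 1) (h₂ : B * delSub A i j = 1) :
    qdet A i j = A i j - ∑ p : {p : I // p ≠ i}, ∑ q : {q : J // q ≠ j},
      A i q.val * B q p * A p.val j := by
  have h : QdetDefined A i j := ⟨B, h₁, h₂⟩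
  have hB : h.choose = B := by
    calc h.choose = (B * delSub A i j) * h.choose := by rw [h₂, Matrix.one_mul]
      _ = B := by rw [Matrix.mul_assoc, h.choose_spec.1, Matrix.mul_one]
  rw [qdet, dif_pos h, hB]

/-- If `x A` vanishes outside column `j`, its entry there is `x_i |A|_{ij}`. -/
lemma row_mul_qdet (A : Matrix I J R) (i : I) (j : J) (h : QdetDefined A i j) (x : I → R)
    (hx : ∀ q, q ≠ j → ∑ p, x p * A p q = 0) :
    ∑ p, x p * A p j = x i * qdet A i j := by
  obtain ⟨B, h₁, h₂⟩ := h
  have split : ∀ q, ∑ p, x p * A p q = x i * A i q + ∑ p : {p : I // p ≠ i}, x p * A p q :=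
    fun q => Fintype.sum_eq_add_sum_subtype_ne _ i
  have key : ∀ p : {p : I // p ≠ i}, x p = -∑ q : {q : J // q ≠ j}, x i * (A i q * B q p) := by
    intro p
    have e1 : ∀ q : {q : J // q ≠ j},
        x i * A i q = -∑ p : {p : I // p ≠ i}, x p * A p q := fun q => by
      rw [eq_neg_iff_add_eq_zero, ← split, hx q q.2]
    have e2 : (fun p : {p : I // p ≠ i} => x p) ᵥ* (delSub A i j) ᵥ* B =
        fun p : {p : I // p ≠ i} => x p := by
      rw [Matrix.vecMul_vecMul, h₁, Matrix.vecMul_one]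
    have e3 := congrFun e2 p
    simp only [Matrix.vecMul, dotProduct, delSub, Matrix.submatrix_apply] at e3
    simp only [← mul_assoc, e1]
    simp only [neg_mul, Finset.sum_neg_distrib, neg_neg]
    exact e3.symm
  rw [split, qdet_eq_of_inv A i j B h₁ h₂, mul_sub, sub_eq_add_neg]
  congr 1
  rw [Finset.mul_sum, ← Finset.sum_neg_distrib]
  refine Finset.sum_congr rfl fun p _ => ?_
  rw [key p, neg_mul, Finset.sum_mul, Finset.mul_sum]
  simp only [mul_assoc]

lemma HasTwoSidedInv.opT {M : Matrix I J R} (h : HasTwoSidedInv M) :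
    HasTwoSidedInv (opT M) := by
  obtain ⟨B, h₁, h₂⟩ := h
  exact ⟨_root_.opT B, by rw [← opT_mul, h₂, opT_one], by rw [← opT_mul, h₁, opT_one]⟩

lemma HasTwoSidedInv.submatrix {K L : Type*} [Fintype K] [Fintype L] [DecidableEq K]
    [DecidableEq L] {M : Matrix I J R} (h : HasTwoSidedInv M) (e : K ≃ I) (f : L ≃ J) :
    HasTwoSidedInv (M.submatrix e f) := by
  obtain ⟨B, h₁, h₂⟩ := h
  refine ⟨B.submatrix f e, ?_, ?_⟩
  · rw [Matrix.submatrix_mul_equiv, h₁, Matrix.submatrix_one_equiv]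
  · rw [Matrix.submatrix_mul_equiv, h₂, Matrix.submatrix_one_equiv]

lemma qdet_opT (A : Matrix I J R) (i : I) (j : J) (h : QdetDefined A i j) :
    qdet (opT A) j i = MulOpposite.op (qdet A i j) := by
  obtain ⟨B, h₁, h₂⟩ := h
  rw [qdet_eq_of_inv A i j B h₁ h₂, qdet_eq_of_inv (opT A) j i (opT B)]
  · simp only [opT, MulOpposite.op_sub, Finset.op_sum, MulOpposite.op_mul, mul_assoc]
    rw [Finset.sum_comm]
  · change opT (delSub A i j) * opT B = 1
    rw [← opT_mul, h₂, opT_one]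
  · change opT B * opT (delSub A i j) = 1
    rw [← opT_mul, h₁, opT_one]

end General

/-! ### Quasideterminants of submatrices of a generic matrix -/

section Sub

variable {n : ℕ}

/-- The quasideterminant at `(i, j)` of the submatrix of `A` with row set `S` and column set `T`
(with value `0` unless `i ∈ S` and `j ∈ T`). -/
noncomputable def subQdet (A : Matrix (Fin n) (Fin n) R) (S T : Finset (Fin n)) (i j : Fin n) : R :=
  if h : i ∈ S ∧ j ∈ T then
    qdet (A.submatrix (Subtype.val : {p : Fin n // p ∈ S} → Fin n)
      (Subtype.val : {q : Fin n // q ∈ T} → Fin n)) ⟨i, h.1⟩ ⟨j, h.2⟩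
  else 0

lemma qdet_eq_subQdet (A : Matrix (Fin n) (Fin n) R) (P Q : Fin n → Prop) [DecidablePred P]
    [DecidablePred Q] (i j : Fin n) (hi : P i) (hj : Q j) :
    qdet (A.submatrix (Subtype.val : {p : Fin n // P p} → Fin n)
      (Subtype.val : {q : Fin n // Q q} → Fin n)) ⟨i, hi⟩ ⟨j, hj⟩ =
    subQdet A (Finset.univ.filter P) (Finset.univ.filter Q) i j := by
  have key : ∀ (P' Q' : Fin n → Prop) [DecidablePred P'] [DecidablePred Q'] (hi' : P' i)
      (hj' : Q' j), P = P' → Q = Q' →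
      qdet (A.submatrix (Subtype.val : {p : Fin n // P p} → Fin n)
        (Subtype.val : {q : Fin n // Q q} → Fin n)) ⟨i, hi⟩ ⟨j, hj⟩ =
      qdet (A.submatrix (Subtype.val : {p : Fin n // P' p} → Fin n)
        (Subtype.val : {q : Fin n // Q' q} → Fin n)) ⟨i, hi'⟩ ⟨j, hj'⟩ := by
    intro P' Q' _ _ hi' hj' hP hQ
    subst hP hQ
    congr!
  rw [subQdet, dif_pos ⟨by simpa using hi, by simpa using hj⟩]
  rw [key (· ∈ Finset.univ.filter P) (· ∈ Finset.univ.filter Q) (by simpa using hi)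
    (by simpa using hj) (by ext; simp) (by ext; simp)]
  congr!

/-- Deleting an element of a finset-subtype, viewed as the subtype of the erased finset. -/
def eraseEquiv (S : Finset (Fin n)) (i : Fin n) (hi : i ∈ S) :
    {p : {p : Fin n // p ∈ S} // p ≠ ⟨i, hi⟩} ≃ {p : Fin n // p ∈ S.erase i} where
  toFun p := ⟨p.1.1, Finset.mem_erase.2 ⟨fun h => p.2 (Subtype.ext h), p.1.2⟩⟩
  invFun p := ⟨⟨p.1, Finset.mem_of_mem_erase p.2⟩,
    fun h => Finset.ne_of_mem_erase p.2 (congrArg Subtype.val h)⟩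
  left_inv _ := rfl
  right_inv _ := rfl

lemma Generic.qdetDefined {A : Matrix (Fin n) (Fin n) R} (hA : Generic A) {S T : Finset (Fin n)}
    (hST : S.card = T.card) {i j : Fin n} (hi : i ∈ S) (hj : j ∈ T) :
    QdetDefined (A.submatrix (Subtype.val : {p : Fin n // p ∈ S} → Fin n)
      (Subtype.val : {q : Fin n // q ∈ T} → Fin n)) ⟨i, hi⟩ ⟨j, hj⟩ :=
  (hA (S.erase i) (T.erase j) (by
    rw [Finset.card_erase_of_mem hi, Finset.card_erase_of_mem hj, hST])).submatrix
    (eraseEquiv S i hi) (eraseEquiv T j hj)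

lemma Generic.opT {A : Matrix (Fin n) (Fin n) R} (hA : Generic A) : Generic (opT A) :=
  fun S T h => (hA T S h.symm).opT

lemma Generic.subQdet_opT {A : Matrix (Fin n) (Fin n) R} (hA : Generic A) {S T : Finset (Fin n)}
    (hST : S.card = T.card) (i j : Fin n) :
    subQdet (_root_.opT A) T S j i = MulOpposite.op (subQdet A S T i j) := by
  by_cases h : i ∈ S ∧ j ∈ T
  · rw [subQdet, subQdet, dif_pos h, dif_pos h.symm, ← qdet_opT _ _ _ (hA.qdetDefined hST h.1 h.2)]
    rfl
  · rw [subQdet, subQdet, dif_neg h, dif_neg (fun h' => h h'.symm), MulOpposite.op_zero]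

lemma Generic.row_mul_subQdet {A : Matrix (Fin n) (Fin n) R} (hA : Generic A)
    {S T : Finset (Fin n)} (hST : S.card = T.card) {i j : Fin n} (hi : i ∈ S) (hj : j ∈ T)
    (x : Fin n → R) (hx : ∀ q ∈ T, q ≠ j → ∑ p ∈ S, x p * A p q = 0) :
    ∑ p ∈ S, x p * A p j = x i * subQdet A S T i j := by
  have := row_mul_qdet _ _ _ (hA.qdetDefined hST hi hj) (fun p => x p.1) (by
    rintro ⟨q, hq⟩ hqj
    rw [← hx q hq (fun h => hqj (Subtype.ext h))]
    exact Finset.sum_coe_sort S (fun p => x p * A p q))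
  rw [subQdet, dif_pos ⟨hi, hj⟩, ← this]
  exact (Finset.sum_coe_sort S (fun p => x p * A p j)).symm

/-- A row of the inverse of the submatrix on `S × T`. -/
lemma Generic.exists_row {A : Matrix (Fin n) (Fin n) R} (hA : Generic A)
    {S T : Finset (Fin n)} (hST : S.card = T.card) {j : Fin n} (hj : j ∈ T) :
    ∃ x : Fin n → R, (∀ q ∈ T, q ≠ j → ∑ p ∈ S, x p * A p q = 0) ∧ ∑ p ∈ S, x p * A p j = 1 := by
  obtain ⟨C, -, hC⟩ := hA S T hST
  have key : ∀ q (hq : q ∈ T), ∑ p ∈ S, (if h : p ∈ S then C ⟨j, hj⟩ ⟨p, h⟩ else 0) * A p q =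
      (1 : Matrix {q // q ∈ T} {q // q ∈ T} R) ⟨j, hj⟩ ⟨q, hq⟩ := by
    intro q hq
    rw [← hC, Matrix.mul_apply, ← Finset.sum_coe_sort S]
    simp
  refine ⟨fun p => if h : p ∈ S then C ⟨j, hj⟩ ⟨p, h⟩ else 0, fun q hq hqj => ?_, ?_⟩
  · rw [key q hq, Matrix.one_apply_ne]
    exact fun h => hqj (congrArg Subtype.val h).symm
  · rw [key j hj, Matrix.one_apply_eq]

end Sub

/-! ### Homological relations over a division ring -/

section DivisionRing

variable {K : Type*} [DivisionRing K] {n : ℕ}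

lemma Generic.subQdet_ne_zero {A : Matrix (Fin n) (Fin n) K} (hA : Generic A)
    {S T : Finset (Fin n)} (hST : S.card = T.card) {i j : Fin n} (hi : i ∈ S) (hj : j ∈ T) :
    subQdet A S T i j ≠ 0 := by
  obtain ⟨x, hx, hx1⟩ := hA.exists_row hST hj
  intro h
  have := hA.row_mul_subQdet hST hi hj x hx
  rw [hx1, h, mul_zero] at this
  exact one_ne_zero this

/-- The homological relation between quasideterminants in the same column: with `M` the submatrix
on `S × T`, `|M|_{ij}⁻¹ |M^{kj}|_{il} = -|M|_{kj}⁻¹ |M^{ij}|_{kl}`. If `x` is row `j` of `M⁻¹`,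
then `x` annihilates every column but `j`, so subtracting a multiple of `x` turns row `l` of the
inverse of `M^{ij}` into a row vector for `M^{kj}`. -/
lemma Generic.homological_row {A : Matrix (Fin n) (Fin n) K} (hA : Generic A)
    {S T : Finset (Fin n)} (hST : S.card = T.card) {i k j l : Fin n} (hi : i ∈ S) (hk : k ∈ S)
    (hik : i ≠ k) (hj : j ∈ T) (hl : l ∈ T) (hjl : j ≠ l) :
    (subQdet A S T i j)⁻¹ * subQdet A (S.erase k) (T.erase j) i l =
      -((subQdet A S T k j)⁻¹ * subQdet A (S.erase i) (T.erase j) k l) := by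
  have hce : ∀ a ∈ S, (S.erase a).card = (T.erase j).card := fun a ha => by
    rw [Finset.card_erase_of_mem ha, Finset.card_erase_of_mem hj, hST]
  have hlT : l ∈ T.erase j := Finset.mem_erase.2 ⟨hjl.symm, hl⟩
  have hkS : k ∈ S.erase i := Finset.mem_erase.2 ⟨hik.symm, hk⟩
  have hiS : i ∈ S.erase k := Finset.mem_erase.2 ⟨hik, hi⟩
  obtain ⟨x, hx, hx1⟩ := hA.exists_row hST hj
  obtain ⟨y, hy, hy1⟩ := hA.exists_row (hce i hi) hlT
  have xi : x i * subQdet A S T i j = 1 := by rw [← hA.row_mul_subQdet hST hi hj x hx, hx1]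
  have xk : x k * subQdet A S T k j = 1 := by rw [← hA.row_mul_subQdet hST hk hj x hx, hx1]
  have yk : y k * subQdet A (S.erase i) (T.erase j) k l = 1 := by
    rw [← hA.row_mul_subQdet (hce i hi) hkS hlT y hy, hy1]
  have hxk : x k ≠ 0 := left_ne_zero_of_mul_eq_one xk
  set z : Fin n → K := fun p => (if p = i then 0 else y p) - y k * (x k)⁻¹ * x p with hz
  have zk : z k = 0 := by
    simp [hz, hik.symm, mul_assoc, inv_mul_cancel₀ hxk]
  have zsum : ∀ q ∈ T, q ≠ j →
      ∑ p ∈ S.erase k, z p * A p q = ∑ p ∈ S.erase i, y p * A p q := by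
    intro q hq hqj
    rw [Finset.sum_erase S (by rw [zk, zero_mul])]
    simp only [hz, sub_mul, Finset.sum_sub_distrib, mul_assoc, ← Finset.mul_sum]
    rw [hx q hq hqj, mul_zero, mul_zero, sub_zero,
      ← Finset.sum_erase S (a := i) (by simp)]
    exact Finset.sum_congr rfl fun p hp => by rw [if_neg (Finset.ne_of_mem_erase hp)]
  have zi : z i * subQdet A (S.erase k) (T.erase j) i l = 1 := by
    rw [← hA.row_mul_subQdet (hce k hk) hiS hlT z, zsum l hl hjl.symm, hy1]
    intro q hq hql
    rw [zsum q (Finset.mem_of_mem_erase hq) (Finset.ne_of_mem_erase hq), hy q hq hql]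
  have zi' : z i = -(y k * (x k)⁻¹ * x i) := by simp [hz]
  have hyk : y k ≠ 0 := left_ne_zero_of_mul_eq_one yk
  rw [← eq_inv_of_mul_eq_one_left xi, ← eq_inv_of_mul_eq_one_left xk,
    eq_inv_of_mul_eq_one_right yk]
  rw [zi', neg_mul, neg_eq_iff_eq_neg, mul_assoc, mul_assoc] at zi
  have : y k * ((x k)⁻¹ * (x i * subQdet A (S.erase k) (T.erase j) i l)) =
      y k * ((x k)⁻¹ * -(x k * (y k)⁻¹)) := by
    rw [zi, mul_neg, mul_neg, inv_mul_cancel_left₀ hxk, mul_inv_cancel₀ hyk]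
  exact mul_left_cancel₀ (inv_ne_zero hxk) (mul_left_cancel₀ hyk this)

/-- The homological relation between quasideterminants in the same row, obtained from the
column version over the opposite ring. -/
lemma Generic.homological_col {A : Matrix (Fin n) (Fin n) K} (hA : Generic A)
    {S T : Finset (Fin n)} (hST : S.card = T.card) {i k j l : Fin n} (hi : i ∈ S) (hk : k ∈ S)
    (hik : i ≠ k) (hj : j ∈ T) (hl : l ∈ T) (hjl : j ≠ l) :
    subQdet A (S.erase i) (T.erase l) k j * (subQdet A S T i j)⁻¹ =
      -(subQdet A (S.erase i) (T.erase j) k l * (subQdet A S T i l)⁻¹) := by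
  have h := hA.opT.homological_row hST.symm hj hl hjl hi hk hik
  have hce : ∀ a ∈ T, (S.erase i).card = (T.erase a).card := fun a ha => by
    rw [Finset.card_erase_of_mem ha, Finset.card_erase_of_mem hi, hST]
  rw [hA.subQdet_opT hST, hA.subQdet_opT hST, hA.subQdet_opT (hce l hl),
    hA.subQdet_opT (hce j hj)] at h
  exact MulOpposite.op_injective h

/-! ### Reordering rows and columns modulo commutators -/

open Classical in
/-- The canonical map `Kˣ → Kˣ/[Kˣ,Kˣ]`, extended to `K` by `0 ↦ 0`. -/
noncomputable def abMap (K : Type*) [DivisionRing K] : K →*₀ WithZero (Abelianization Kˣ) :=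
  (WithZero.map' (Abelianization.of (G := Kˣ))).comp
    (.ofClass (WithZero.withZeroUnitsEquiv (G := K)).symm)

lemma abMap_unit (u : Kˣ) : abMap K u = (Abelianization.of u : Abelianization Kˣ) := by
  classical
  simp [abMap]

/-- The labels in positions `≥ k` of the ordering `σ`, that is, the rows (or columns) that remain
when the factor with index `k` of `D_{I,J}` is formed. -/
def tail (σ : Equiv.Perm (Fin n)) (k : Fin n) : Finset (Fin n) :=
  Finset.univ.filter fun p => k ≤ σ.symm p

lemma mem_tail {σ : Equiv.Perm (Fin n)} {k p : Fin n} : p ∈ tail σ k ↔ k ≤ σ.symm p := by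
  simp [tail]

lemma card_tail (σ τ : Equiv.Perm (Fin n)) (k : Fin n) : (tail σ k).card = (tail τ k).card := by
  refine Finset.card_equiv (σ.symm.trans τ) fun p => ?_
  simp [mem_tail]

lemma DIJ_eq_prod (A : Matrix (Fin n) (Fin n) K) (σ τ : Equiv.Perm (Fin n)) :
    DIJ A σ τ = ((List.finRange n).map fun k =>
      subQdet A (tail σ k) (tail τ k) (σ k) (τ k)).prod := by
  unfold DIJ
  congr 2
  funext k
  exact qdet_eq_subQdet A _ _ _ _ _ _

lemma abMap_DIJ (A : Matrix (Fin n) (Fin n) K) (σ τ : Equiv.Perm (Fin n)) :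
    abMap K (DIJ A σ τ) =
      ∏ k, abMap K (subQdet A (tail σ k) (tail τ k) (σ k) (τ k)) := by
  rw [DIJ_eq_prod, map_list_prod, List.map_map, Fin.prod_univ_def]
  rfl

lemma Generic.DIJ_ne_zero {A : Matrix (Fin n) (Fin n) K} (hA : Generic A)
    (σ τ : Equiv.Perm (Fin n)) : DIJ A σ τ ≠ 0 := by
  rw [DIJ_eq_prod]
  refine List.prod_ne_zero fun h => ?_
  obtain ⟨k, -, hk⟩ := List.mem_map.1 h
  exact hA.subQdet_ne_zero (card_tail σ τ k) (by simp [mem_tail]) (by simp [mem_tail]) hk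

lemma prod_eq_mul_of_pair {M ι : Type*} [CommMonoid M] [Fintype ι] [DecidableEq ι] {f g : ι → M}
    {a b : ι} (hab : a ≠ b) (c : M) (h : f a * f b = c * (g a * g b))
    (hne : ∀ i, i ≠ a → i ≠ b → f i = g i) : ∏ i, f i = c * ∏ i, g i := by
  rw [← Finset.prod_mul_prod_compl {a, b} f, ← Finset.prod_mul_prod_compl {a, b} g,
    Finset.prod_pair hab, Finset.prod_pair hab, h, mul_assoc]
  congr 2
  refine Finset.prod_congr rfl fun i hi => ?_
  simp only [Finset.mem_compl, Finset.mem_insert, Finset.mem_singleton, not_or] at hi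
  exact hne i hi.1 hi.2

lemma tail_succ {m : ℕ} (σ : Equiv.Perm (Fin (m + 1))) (k : Fin m) :
    tail σ k.succ = (tail σ k.castSucc).erase (σ k.castSucc) := by
  ext p
  rw [Finset.mem_erase, mem_tail, mem_tail, ne_eq, ← Equiv.symm_apply_eq]
  simp only [Fin.ext_iff, Fin.le_def, Fin.val_castSucc, Fin.val_succ]
  omega

/-- An adjacent transposition changes only the tail that separates the two positions. -/
lemma tail_mul_swap {m : ℕ} (σ : Equiv.Perm (Fin (m + 1))) (k : Fin m) {l : Fin (m + 1)}
    (hl : l ≠ k.succ) : tail (σ * Equiv.swap k.castSucc k.succ) l = tail σ l := by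
  ext p
  rw [mem_tail, mem_tail]
  have : (σ * Equiv.swap k.castSucc k.succ).symm p =
      Equiv.swap k.castSucc k.succ (σ.symm p) := rfl
  rw [this]
  generalize σ.symm p = r
  rw [Equiv.swap_apply_def]
  split_ifs <;> simp only [Fin.ext_iff, Fin.le_def, Fin.val_castSucc, Fin.val_succ, ne_eq] at * <;>
    omega

lemma tail_mul_swap_succ {m : ℕ} (σ : Equiv.Perm (Fin (m + 1))) (k : Fin m) :
    tail (σ * Equiv.swap k.castSucc k.succ) k.succ =
      (tail σ k.castSucc).erase (σ k.succ) := by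
  rw [tail_succ, tail_mul_swap _ _ (Fin.castSucc_lt_succ).ne]
  simp

lemma castSucc_mem_tail {m : ℕ} (σ : Equiv.Perm (Fin (m + 1))) (k : Fin m) :
    σ k.castSucc ∈ tail σ k.castSucc := by simp [mem_tail]

lemma succ_mem_tail {m : ℕ} (σ : Equiv.Perm (Fin (m + 1))) (k : Fin m) :
    σ k.succ ∈ tail σ k.castSucc := by
  simpa [mem_tail] using Fin.castSucc_lt_succ.le

lemma apply_castSucc_ne {m : ℕ} (σ : Equiv.Perm (Fin (m + 1))) (k : Fin m) :
    σ k.castSucc ≠ σ k.succ :=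
  fun h => Fin.castSucc_lt_succ.ne (σ.injective h)

lemma Generic.abMap_DIJ_swap_left {m : ℕ} {A : Matrix (Fin (m + 1)) (Fin (m + 1)) K}
    (hA : Generic A) (σ τ : Equiv.Perm (Fin (m + 1))) (k : Fin m) :
    abMap K (DIJ A (σ * Equiv.swap k.castSucc k.succ) τ) = abMap K (-1) * abMap K (DIJ A σ τ) := by
  rw [abMap_DIJ, abMap_DIJ]
  refine prod_eq_mul_of_pair (Fin.castSucc_lt_succ (i := k)).ne _ ?_ ?_
  · rw [tail_mul_swap_succ, tail_mul_swap _ _ Fin.castSucc_lt_succ.ne, tail_succ, tail_succ,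
      Equiv.Perm.mul_apply, Equiv.Perm.mul_apply, Equiv.swap_apply_left, Equiv.swap_apply_right]
    have hc := card_tail σ τ k.castSucc
    have h := hA.homological_row hc (castSucc_mem_tail σ k) (succ_mem_tail σ k)
      (apply_castSucc_ne σ k) (castSucc_mem_tail τ k) (succ_mem_tail τ k) (apply_castSucc_ne τ k)
    have h1 := (map_ne_zero (abMap K)).2
      (hA.subQdet_ne_zero hc (castSucc_mem_tail σ k) (castSucc_mem_tail τ k))
    have h2 := (map_ne_zero (abMap K)).2
      (hA.subQdet_ne_zero hc (succ_mem_tail σ k) (castSucc_mem_tail τ k))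
    rw [← neg_one_mul] at h
    have h' := congrArg (abMap K) h
    simp only [map_mul, map_inv₀] at h'
    field_simp at h'
    rw [mul_comm, h']
    ac_rfl
  · intro l h1 h2
    rw [tail_mul_swap _ _ h2, Equiv.Perm.mul_apply, Equiv.swap_apply_of_ne_of_ne h1 h2]

lemma Generic.abMap_DIJ_swap_right {m : ℕ} {A : Matrix (Fin (m + 1)) (Fin (m + 1)) K}
    (hA : Generic A) (σ τ : Equiv.Perm (Fin (m + 1))) (k : Fin m) :
    abMap K (DIJ A σ (τ * Equiv.swap k.castSucc k.succ)) = abMap K (-1) * abMap K (DIJ A σ τ) := by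
  rw [abMap_DIJ, abMap_DIJ]
  refine prod_eq_mul_of_pair (Fin.castSucc_lt_succ (i := k)).ne _ ?_ ?_
  · rw [tail_mul_swap_succ, tail_mul_swap _ _ Fin.castSucc_lt_succ.ne, tail_succ, tail_succ,
      Equiv.Perm.mul_apply, Equiv.Perm.mul_apply, Equiv.swap_apply_left, Equiv.swap_apply_right]
    have hc := card_tail σ τ k.castSucc
    have h := hA.homological_col hc (castSucc_mem_tail σ k) (succ_mem_tail σ k)
      (apply_castSucc_ne σ k) (castSucc_mem_tail τ k) (succ_mem_tail τ k) (apply_castSucc_ne τ k)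
    have h1 := (map_ne_zero (abMap K)).2
      (hA.subQdet_ne_zero hc (castSucc_mem_tail σ k) (castSucc_mem_tail τ k))
    have h2 := (map_ne_zero (abMap K)).2
      (hA.subQdet_ne_zero hc (castSucc_mem_tail σ k) (succ_mem_tail τ k))
    rw [← neg_one_mul] at h
    have h' := congrArg (abMap K) h
    simp only [map_mul, map_inv₀] at h'
    field_simp at h'
    rw [mul_comm, h']
    ac_rfl
  · intro l h1 h2
    rw [tail_mul_swap _ _ h2, Equiv.Perm.mul_apply, Equiv.swap_apply_of_ne_of_ne h1 h2]

/-- A function on permutations that changes by `π(-1)` under each adjacent transposition on the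
right is the sign character, up to its value at the identity. -/
lemma eq_sign_mul_of_swap {m : ℕ} (F : Equiv.Perm (Fin (m + 1)) → WithZero (Abelianization Kˣ))
    (hF : ∀ σ (k : Fin m), F (σ * Equiv.swap k.castSucc k.succ) = abMap K (-1) * F σ)
    (σ : Equiv.Perm (Fin (m + 1))) :
    F σ = abMap K ((Equiv.Perm.sign σ : ℤ) : K) * F 1 := by
  have hσ : σ ∈ Submonoid.closure (Set.range fun i : Fin m => Equiv.swap i.castSucc i.succ) := by
    rw [Equiv.Perm.mclosure_swap_castSucc_succ]; trivial
  induction hσ using Submonoid.closure_induction_right with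
  | one => simp
  | mul_right x hx y hy ih =>
    obtain ⟨k, rfl⟩ := hy
    rw [hF, ih, Equiv.Perm.sign_mul, Equiv.Perm.sign_swap Fin.castSucc_lt_succ.ne, ← mul_assoc,
      ← map_mul]
    simp

lemma Generic.abMap_DIJ_eq {A : Matrix (Fin n) (Fin n) K} (hA : Generic A)
    (σ τ : Equiv.Perm (Fin n)) :
    abMap K (DIJ A σ τ) = abMap K (((Equiv.Perm.sign σ * Equiv.Perm.sign τ : ℤˣ) : ℤ) : K) *
      abMap K (Delta A) := by
  cases n with
  | zero =>
    rw [Subsingleton.elim σ (Equiv.refl _), Subsingleton.elim τ (Equiv.refl _), Delta]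
    simp
  | succ m =>
    rw [eq_sign_mul_of_swap (fun σ => abMap K (DIJ A σ τ))
        (fun σ k => hA.abMap_DIJ_swap_left σ τ k) σ,
      eq_sign_mul_of_swap (fun τ => abMap K (DIJ A 1 τ))
        (fun τ k => hA.abMap_DIJ_swap_right 1 τ k) τ, ← mul_assoc, ← map_mul,
      Units.val_mul, Int.cast_mul]
    rfl

end DivisionRing

/-- `D_{I,J}(A)` is invertible and, in the abelianization of `Rˣ`,
`π(D_{I,J}(A)) = π(p(I) p(J)) · π(Δ(A))`. -/
theorem pi_DIJ_eq_sign_mul_pi_Delta {R : Type*} [DivisionRing R] {n : ℕ}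
    (A : Matrix (Fin n) (Fin n) R) (hA : Generic A) (σ τ : Equiv.Perm (Fin n)) :
    ∃ d δ : Rˣ, (d : R) = DIJ A σ τ ∧ (δ : R) = Delta A ∧
      Abelianization.of d =
        Abelianization.of
          (Units.map (Int.castRingHom R).toMonoidHom (Equiv.Perm.sign σ * Equiv.Perm.sign τ)) *
        Abelianization.of δ := by
  refine ⟨Units.mk0 _ (hA.DIJ_ne_zero σ τ), Units.mk0 (Delta A) (hA.DIJ_ne_zero _ _), rfl, rfl, ?_⟩
  apply WithZero.coe_injective
  rw [WithZero.coe_mul, ← abMap_unit, ← abMap_unit, ← abMap_unit]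
  exact hA.abMap_DIJ_eq σ τ
end

section
/- Let A = (a_{pq}) be a generic n×n matrix over the quaternions ℍ and fix indices i, j. Then ν(A^{ij}) |A|_{ij} = Σ_B (−1)^{K(B)−1} ν(B^c) π_{ij}(B), where the sum is taken over all square submatrices B of A containing the entry a_{ij} (i.e., B is given by a set S of rows with i ∈ S and a set T of columns with j ∈ T, |S| = |T|), K(B) = |S| is the order of B, and B^c is the complementary submatrix of A on the rows not in S and the columns not in T. -/
/-!
The identity is proved for all submatrices by induction on their order. For row and column sets
`S`, `T` of equal size and `i`, `j` outside them, let `U` be the inverse of `A_{S,T}`, so that the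
quasideterminant at `(i, j)` is `a_{ij} - ∑ a_{iq} U_{qp} a_{pj}` (`qd`).

The double permanent is a sum over alternating paths `i → q₁ → p₁ → q₂ → ⋯ → j` (`dperm_eq`).
Splitting off the first two steps `i → q → p` (`expTerm_step`) turns the right-hand side into
`ν(A_{S,T}) a_{ij} - ∑_{p,q} a_{iq} ā_{pq} E_{pq}`, where `E_{pq}` is the same expansion for
`S \ {p}`, `T \ {q}` and the position `(p, j)`. By induction
`E_{pq} = ν(A_{S∖p,T∖q}) |A_{S,(T∖q)∪j}|_{pj}`, so it remains to see, for each `q`, the Cramer-type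
rule `∑_p ā_{pq} E_{pq} = ν(A_{S,T}) ∑_p U_{qp} a_{pj}` (`cramer_sum`).

Two facts give this rule. First, `|A_{S,(T∖q)∪j}|_{pj} = U_{qp}⁻¹ ∑_r U_{qr} a_{rj}`, because the
vectors annihilating all columns of `A_{S,T}` but the `q`-th form a line spanned by row `q` of `U`
(`qd_eq_mul`). Second, `ν(A_{S∖p,T∖q}) = ν(A_{S,T}) ν(U_{qp})` (from `nuOfSub_eq_mul`). Hence
`E_{pq} = ν(A_{S,T}) Ū_{qp} ∑_r U_{qr} a_{rj}`, and `∑_p ā_{pq} Ū_{qp}` is the conjugate of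
`∑_p U_{qp} a_{pq} = 1`.

The second fact needs `ν` to be insensitive to reordering rows and columns. This is seen by
identifying `ν²` with the absolute value of the determinant of the real matrix obtained by
replacing each quaternion with its `4 × 4` left-multiplication matrix (`nuMat_sq`, `nuOfSub_sq`).
-/

open Matrix

variable {R : Type*} [Ring R]

open scoped Quaternion

/-- `y_k(C) = |C^{1…k−1,1…k−1}|_{kk}`, the `(k,k)`-quasideterminant of the submatrix of `C`
on rows and columns `k, …, m`. -/
noncomputable def ykQdet {R : Type*} [Ring R] {m : ℕ} (C : Matrix (Fin m) (Fin m) R)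
    (k : Fin m) : R :=
  qdet (C.submatrix (Subtype.val : {p : Fin m // k ≤ p} → Fin m)
    (Subtype.val : {q : Fin m // k ≤ q} → Fin m)) ⟨k, le_refl k⟩ ⟨k, le_refl k⟩

/-- The norm `ν(C) = Π_k ν(y_k(C)) ∈ ℝ` of a square quaternionic matrix. -/
noncomputable def nuMat {m : ℕ} (C : Matrix (Fin m) (Fin m) ℍ[ℝ]) : ℝ :=
  ∏ k : Fin m, Quaternion.normSq (ykQdet C k)

/-- The norm of the square submatrix of `A` on rows `S` and columns `T` (each taken in
increasing order); junk value `0` if `S.card ≠ T.card`. -/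
noncomputable def nuOfSub {n : ℕ} (A : Matrix (Fin n) (Fin n) ℍ[ℝ])
    (S T : Finset (Fin n)) : ℝ :=
  if h : S.card = T.card then
    nuMat (Matrix.of fun p q : Fin S.card =>
      A ((S.orderIsoOfFin rfl p : Fin n)) ((T.orderIsoOfFin h.symm q : Fin n)))
  else 0

/-- The monomial `m_{I,J}(B) = a_{i₁j₂} ā_{i₂j₂} a_{i₂j₃} ⋯ ā_{i_kj_k} a_{i_kj₁}`
(`= a_{i₁j₁}` when `k = 1`) attached to orderings `LI = (i₁,…,i_k)`, `LJ = (j₁,…,j_k)`;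
the entries are taken from the ambient matrix `A`. -/
noncomputable def listMono {n : ℕ} (A : Matrix (Fin n) (Fin n) ℍ[ℝ]) (i j : Fin n)
    (LI LJ : List (Fin n)) : ℍ[ℝ] :=
  (((List.range (LI.length - 1)).map (fun t =>
      A (LI.getD t i) (LJ.getD (t + 1) j) * star (A (LI.getD (t + 1) i) (LJ.getD (t + 1) j)))).prod)
    * A (LI.getD (LI.length - 1) i) (LJ.getD 0 j)

/-- The `(i,j)`-th double permanent `π_{ij}(B)` of the submatrix `B` of `A` on rows `S` and
columns `T`: the sum of `m_{I,J}(B)` over all orderings `I` of `S` with `i₁ = i` and all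
orderings `J` of `T` with `j₁ = j`. -/
noncomputable def dperm {n : ℕ} (A : Matrix (Fin n) (Fin n) ℍ[ℝ]) (i j : Fin n)
    (S T : Finset (Fin n)) : ℍ[ℝ] :=
  ((S.toList.permutations.filter (fun L => L.head? = some i)).map (fun LI =>
    ((T.toList.permutations.filter (fun L => L.head? = some j)).map (fun LJ =>
      listMono A i j LI LJ)).sum)).sum

/-! ### Real determinants of quaternionic matrices -/

/-- The real `4 × 4` matrix of left multiplication by a quaternion in the basis `1, i, j, k`. -/
def quatMat (h : ℍ[ℝ]) : Matrix (Fin 4) (Fin 4) ℝ :=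
  !![h.re, -h.imI, -h.imJ, -h.imK;
     h.imI, h.re, -h.imK, h.imJ;
     h.imJ, h.imK, h.re, -h.imI;
     h.imK, -h.imJ, h.imI, h.re]

lemma quatMat_mul (x y : ℍ[ℝ]) : quatMat (x * y) = quatMat x * quatMat y := by
  ext s t
  fin_cases s <;> fin_cases t <;>
    simp [quatMat, Matrix.mul_apply, Fin.sum_univ_four] <;> ring

lemma quatMat_zero : quatMat 0 = 0 := by
  ext s t
  fin_cases s <;> fin_cases t <;> simp [quatMat]

lemma quatMat_one : quatMat 1 = 1 := by
  ext s t
  fin_cases s <;> fin_cases t <;> simp [quatMat]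

lemma quatMat_add (x y : ℍ[ℝ]) : quatMat (x + y) = quatMat x + quatMat y := by
  ext s t
  fin_cases s <;> fin_cases t <;> simp [quatMat] <;> ring

lemma quatMat_sub (x y : ℍ[ℝ]) : quatMat (x - y) = quatMat x - quatMat y := by
  ext s t
  fin_cases s <;> fin_cases t <;> simp [quatMat] <;> ring

lemma det_quatMat (h : ℍ[ℝ]) : (quatMat h).det = Quaternion.normSq h ^ 2 := by
  rw [Quaternion.normSq_def']
  simp [quatMat, Matrix.det_succ_row_zero, Fin.sum_univ_succ, Fin.succAbove]
  ring

/-- The real matrix obtained from a quaternionic matrix by replacing each entry with its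
left-multiplication block. -/
def realify {I J : Type*} (M : Matrix I J ℍ[ℝ]) : Matrix (I × Fin 4) (J × Fin 4) ℝ :=
  fun p q => quatMat (M p.1 q.1) p.2 q.2

lemma quatMat_sum {K : Type*} (s : Finset K) (f : K → ℍ[ℝ]) :
    quatMat (∑ k ∈ s, f k) = ∑ k ∈ s, quatMat (f k) :=
  map_sum (AddMonoidHom.mk' quatMat quatMat_add) f s

lemma realify_mul {I J K : Type*} [Fintype J] (M : Matrix I J ℍ[ℝ]) (N : Matrix J K ℍ[ℝ]) :
    realify (M * N) = realify M * realify N := by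
  ext p q
  simp only [realify, Matrix.mul_apply, quatMat_sum, quatMat_mul, Matrix.sum_apply,
    Fintype.sum_prod_type]

lemma realify_sub {I J : Type*} (M N : Matrix I J ℍ[ℝ]) :
    realify (M - N) = realify M - realify N := by
  ext p q
  simp [realify, quatMat_sub]

lemma realify_one {I : Type*} [DecidableEq I] : realify (1 : Matrix I I ℍ[ℝ]) = 1 := by
  ext ⟨p, s⟩ ⟨q, t⟩
  by_cases h : p = q
  · subst h
    simp [realify, quatMat_one, Matrix.one_apply]
  · simp [realify, quatMat_zero, h]

/-- The absolute value of the real determinant of a square quaternionic matrix acting by left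
multiplication; it is the square of `ν`. -/
noncomputable def rdet {I : Type*} [Fintype I] [DecidableEq I] (M : Matrix I I ℍ[ℝ]) : ℝ :=
  |(realify M).det|

lemma rdet_submatrix {I K : Type*} [Fintype I] [DecidableEq I] [Fintype K] [DecidableEq K]
    (M : Matrix I I ℍ[ℝ]) (e f : K ≃ I) : rdet (M.submatrix e f) = rdet M := by
  have : realify (M.submatrix e f) = (realify M).submatrix (e.prodCongr (Equiv.refl (Fin 4)))
      (f.prodCongr (Equiv.refl (Fin 4))) := by
    ext p q; rfl
  rw [rdet, this, Matrix.abs_det_submatrix_equiv_equiv]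
  rfl

lemma rdet_unit (h : ℍ[ℝ]) : rdet (Matrix.of fun _ _ : Unit => h) = Quaternion.normSq h ^ 2 := by
  have : realify (Matrix.of fun _ _ : Unit => h) =
      (quatMat h).submatrix (Equiv.punitProd (Fin 4)) (Equiv.punitProd (Fin 4)) := by
    ext p q; rfl
  rw [rdet, this, Matrix.det_submatrix_equiv_self, det_quatMat, abs_of_nonneg (sq_nonneg _)]

/-- Schur complement formula: the complement of the block `N = M^{11}` is the
quasideterminant `|M|_{11} = a - r N⁻¹ c`. -/
lemma rdet_schur {K : Type*} [Fintype K] [DecidableEq K] (M : Matrix (Unit ⊕ K) (Unit ⊕ K) ℍ[ℝ])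
    (V : Matrix K K ℍ[ℝ]) (h1 : M.toBlocks₂₂ * V = 1) (h2 : V * M.toBlocks₂₂ = 1) :
    rdet M = Quaternion.normSq (M (.inl ()) (.inl ()) -
        ∑ p, ∑ q, M (.inl ()) (.inr q) * V q p * M (.inr p) (.inl ())) ^ 2 *
      rdet M.toBlocks₂₂ := by
  have hb : realify M = (fromBlocks (realify M.toBlocks₁₁) (realify M.toBlocks₁₂)
      (realify M.toBlocks₂₁) (realify M.toBlocks₂₂)).submatrix
      (Equiv.sumProdDistrib _ _ _) (Equiv.sumProdDistrib _ _ _) := by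
    ext ⟨p | p, s⟩ ⟨q | q, t⟩ <;> rfl
  let _ : Invertible (realify M.toBlocks₂₂) :=
    ⟨realify V, by rw [← realify_mul, h2, realify_one], by rw [← realify_mul, h1, realify_one]⟩
  have hV : ⅟(realify M.toBlocks₂₂) = realify V := rfl
  rw [rdet, hb, Matrix.det_submatrix_equiv_self, Matrix.det_fromBlocks₂₂, hV, abs_mul, mul_comm,
    ← realify_mul, ← realify_mul, ← realify_sub, ← rdet_unit]
  congr 2
  congr 2
  ext1 p q
  simp only [Matrix.sub_apply, Matrix.mul_apply, Finset.sum_mul]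
  rfl

/-! ### Generic matrices and quasideterminants -/

lemma HasTwoSidedInv.submatrix_equiv {I J K : Type*} [Fintype I] [Fintype J] [DecidableEq I]
    [DecidableEq J] [Fintype K] [DecidableEq K] {M : Matrix I J R} (h : HasTwoSidedInv M)
    (e : K ≃ I) (f : K ≃ J) : HasTwoSidedInv (M.submatrix e f) := by
  obtain ⟨B, h1, h2⟩ := h
  refine ⟨B.submatrix f e, ?_, ?_⟩
  · rw [Matrix.submatrix_mul_equiv, h1, Matrix.submatrix_one_equiv]
  · rw [Matrix.submatrix_mul_equiv, h2, Matrix.submatrix_one_equiv]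

/-- Genericity in terms of injective enumerations of rows and columns; this form passes
immediately to submatrices. -/
def GenericEmb {I : Type*} (A : Matrix I I R) : Prop :=
  ∀ (K : Type) [Fintype K] [DecidableEq K] (e f : K → I), Function.Injective e →
    Function.Injective f → HasTwoSidedInv (A.submatrix e f)

lemma GenericEmb.submatrix {I I' : Type*} {A : Matrix I I R} (hA : GenericEmb A) {g h : I' → I}
    (hg : Function.Injective g) (hh : Function.Injective h) : GenericEmb (A.submatrix g h) :=
  fun K _ _ e f he hf => hA K (g ∘ e) (h ∘ f) (hg.comp he) (hh.comp hf)

/-- The equivalence onto a finset given by an injective enumeration of it. -/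
noncomputable def enumEquiv {I K : Type*} {e : K → I} (he : Function.Injective e) {S : Finset I}
    (hS : ∀ p, p ∈ S ↔ ∃ k, e k = p) : K ≃ {p // p ∈ S} :=
  Equiv.ofBijective (fun k => ⟨e k, (hS _).2 ⟨k, rfl⟩⟩)
    ⟨fun a b hab => he (congrArg Subtype.val hab), fun ⟨p, hp⟩ => by
      obtain ⟨k, hk⟩ := (hS p).1 hp
      exact ⟨k, Subtype.ext hk⟩⟩

lemma Generic.emb {n : ℕ} {A : Matrix (Fin n) (Fin n) R} (hA : Generic A) : GenericEmb A := by
  intro K _ _ e f he hf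
  have hS : ∀ p, p ∈ Finset.univ.image e ↔ ∃ k, e k = p := by simp
  have hT : ∀ p, p ∈ Finset.univ.image f ↔ ∃ k, f k = p := by simp
  have := (hA (Finset.univ.image e) (Finset.univ.image f)
    (by rw [Finset.card_image_of_injective _ he, Finset.card_image_of_injective _ hf])).submatrix_equiv
    (enumEquiv he hS) (enumEquiv hf hT)
  exact this

/-- The quasideterminant computed from an enumeration of the remaining rows and columns. -/
lemma qdet_eq {I J K : Type*} [Fintype I] [Fintype J] [DecidableEq I] [DecidableEq J]
    [Fintype K] [DecidableEq K] (A : Matrix I J R) (i : I) (j : J) (e : K ≃ {p // p ≠ i})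
    (f : K ≃ {q // q ≠ j}) (V : Matrix K K R)
    (h1 : (A.submatrix (fun s => (e s : I)) (fun t => (f t : J))) * V = 1)
    (h2 : V * (A.submatrix (fun s => (e s : I)) (fun t => (f t : J))) = 1) :
    qdet A i j = A i j - ∑ s, ∑ t, A i (f t) * V t s * A (e s) j := by
  have hM : (A.submatrix (fun s => (e s : I)) (fun t => (f t : J))) =
      (delSub A i j).submatrix e f := rfl
  have hd : delSub A i j = ((delSub A i j).submatrix e f).submatrix e.symm f.symm := by
    ext p q; simp
  rw [hM] at h1 h2
  have h1' : delSub A i j * V.submatrix f.symm e.symm = 1 := by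
    rw [hd, Matrix.submatrix_mul_equiv, h1, Matrix.submatrix_one_equiv]
  have h2' : V.submatrix f.symm e.symm * delSub A i j = 1 := by
    rw [hd, Matrix.submatrix_mul_equiv, h2, Matrix.submatrix_one_equiv]
  have hdef : QdetDefined A i j := ⟨_, h1', h2'⟩
  have hch : hdef.choose = V.submatrix f.symm e.symm := by
    calc hdef.choose = hdef.choose * (delSub A i j * V.submatrix f.symm e.symm) := by
          rw [h1', Matrix.mul_one]
      _ = V.submatrix f.symm e.symm := by
          rw [← Matrix.mul_assoc, hdef.choose_spec.2, Matrix.one_mul]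
  rw [qdet, dif_pos hdef, hch]
  congr 1
  rw [← Equiv.sum_comp e]
  refine Finset.sum_congr rfl fun s _ => ?_
  rw [← Equiv.sum_comp f]
  simp

/-- The rows `k < p` as the elements different from `k` of the index set `{p // k ≤ p}`. -/
def gtEquiv {m : ℕ} (k : Fin m) :
    {p : Fin m // k < p} ≃ {p : {p : Fin m // k ≤ p} // p ≠ ⟨k, le_refl k⟩} where
  toFun p := ⟨⟨p.1, p.2.le⟩, fun h => p.2.ne' (congrArg Subtype.val h)⟩
  invFun p := ⟨p.1.1, lt_of_le_of_ne p.1.2 fun h => p.2 (Subtype.ext h.symm)⟩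
  left_inv _ := rfl
  right_inv _ := rfl

/-- Shifting by one identifies the rows after `k` with the rows after `k + 1`. -/
noncomputable def gtSuccEquiv {m : ℕ} (k : Fin m) : {p : Fin m // k < p} ≃ {p : Fin (m + 1) // k.succ < p} :=
  Equiv.ofBijective (fun p => ⟨p.1.succ, Fin.succ_lt_succ_iff.2 p.2⟩)
    ⟨fun a b h => Subtype.ext (Fin.succ_injective _ (congrArg Subtype.val h)), fun ⟨p, hp⟩ => by
      obtain ⟨q, rfl⟩ := Fin.exists_succ_eq.2 (ne_of_gt (lt_of_le_of_lt (Fin.zero_le _) hp))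
      exact ⟨⟨q, Fin.succ_lt_succ_iff.1 hp⟩, rfl⟩⟩

/-- The positive indices of `Fin (m + 1)` are the successors. -/
noncomputable def gtZeroEquiv (m : ℕ) : Fin m ≃ {p : Fin (m + 1) // 0 < p} :=
  Equiv.ofBijective (fun p => ⟨p.succ, Fin.succ_pos p⟩)
    ⟨fun a b h => Fin.succ_injective _ (congrArg Subtype.val h), fun ⟨p, hp⟩ => by
      obtain ⟨q, rfl⟩ := Fin.exists_succ_eq.2 (ne_of_gt hp)
      exact ⟨q, rfl⟩⟩

lemma ykQdet_succ {m : ℕ} (C : Matrix (Fin (m + 1)) (Fin (m + 1)) R) (hC : GenericEmb C)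
    (k : Fin m) : ykQdet C k.succ = ykQdet (C.submatrix Fin.succ Fin.succ) k := by
  obtain ⟨V, h1, h2⟩ := hC {p : Fin m // k < p} (fun p => p.1.succ) (fun p => p.1.succ)
    (fun a b h => Subtype.ext (Fin.succ_injective _ h))
    (fun a b h => Subtype.ext (Fin.succ_injective _ h))
  rw [ykQdet, ykQdet, qdet_eq _ _ _ (gtEquiv k) (gtEquiv k) V h1 h2,
    qdet_eq _ _ _ ((gtSuccEquiv k).trans (gtEquiv k.succ))
      ((gtSuccEquiv k).trans (gtEquiv k.succ)) V h1 h2]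
  rfl

lemma ykQdet_zero {m : ℕ} (C : Matrix (Fin (m + 1)) (Fin (m + 1)) R) (V : Matrix (Fin m) (Fin m) R)
    (h1 : C.submatrix Fin.succ Fin.succ * V = 1) (h2 : V * C.submatrix Fin.succ Fin.succ = 1) :
    ykQdet C 0 = C 0 0 - ∑ p, ∑ q, C 0 (Fin.succ q) * V q p * C (Fin.succ p) 0 := by
  rw [ykQdet, qdet_eq _ _ _ ((gtZeroEquiv m).trans (gtEquiv 0))
    ((gtZeroEquiv m).trans (gtEquiv 0)) V h1 h2]
  rfl

/-- The Schur complement formula, applied repeatedly, peels the factors `y_k` off the real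
determinant. -/
lemma nuMat_sq {m : ℕ} (C : Matrix (Fin m) (Fin m) ℍ[ℝ]) (hC : GenericEmb C) :
    nuMat C ^ 2 = rdet C := by
  induction m with
  | zero => simp [nuMat, rdet]
  | succ m ih =>
    have hi := Fin.succ_injective m
    obtain ⟨V, h1, h2⟩ := hC (Fin m) Fin.succ Fin.succ hi hi
    have hy : ykQdet C 0 = C 0 0 - ∑ p, ∑ q, C 0 (Fin.succ q) * V q p * C (Fin.succ p) 0 := by
      exact ykQdet_zero C V h1 h2
    have hr : nuMat C = Quaternion.normSq (ykQdet C 0) * nuMat (C.submatrix Fin.succ Fin.succ) := by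
      rw [nuMat, Fin.prod_univ_succ, nuMat]
      simp only [ykQdet_succ C hC]
    let g : Unit ⊕ Fin m → Fin (m + 1) := Sum.elim (fun _ => 0) Fin.succ
    have hg : Function.Bijective g := by
      constructor
      · rintro (a | a) (b | b) h
        · rfl
        · exact absurd h.symm (Fin.succ_ne_zero b)
        · exact absurd h (Fin.succ_ne_zero a)
        · exact congrArg Sum.inr (hi h)
      · intro p
        refine Fin.cases ⟨.inl (), rfl⟩ (fun q => ⟨.inr q, rfl⟩) p
    have hs := rdet_schur (C.submatrix g g) V h1 h2
    have hC' : rdet (C.submatrix g g) = rdet C :=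
      rdet_submatrix C (Equiv.ofBijective g hg) (Equiv.ofBijective g hg)
    have hb : (C.submatrix g g).toBlocks₂₂ = C.submatrix Fin.succ Fin.succ := rfl
    rw [hC', hb, ← ih _ (hC.submatrix hi hi)] at hs
    rw [hs, hr, mul_pow, hy]
    rfl

/-! ### The norm of a submatrix -/

lemma nuOfSub_nonneg {n : ℕ} (A : Matrix (Fin n) (Fin n) ℍ[ℝ]) (S T : Finset (Fin n)) :
    0 ≤ nuOfSub A S T := by
  rw [nuOfSub]
  split_ifs
  · exact Finset.prod_nonneg fun k _ => Quaternion.normSq_nonneg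
  · exact le_rfl

/-- The norm of a submatrix does not depend on how its rows and columns are ordered. -/
lemma nuOfSub_sq {n : ℕ} (A : Matrix (Fin n) (Fin n) ℍ[ℝ]) (hA : GenericEmb A)
    (S T : Finset (Fin n)) {K : Type*} [Fintype K] [DecidableEq K] (e f : K → Fin n)
    (he : Function.Injective e) (hf : Function.Injective f)
    (hS : ∀ p, p ∈ S ↔ ∃ k, e k = p) (hT : ∀ p, p ∈ T ↔ ∃ k, f k = p) :
    nuOfSub A S T ^ 2 = rdet (A.submatrix e f) := by
  have hcard : S.card = T.card := by
    have := Fintype.card_congr ((enumEquiv he hS).symm.trans (enumEquiv hf hT))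
    simpa using this
  rw [nuOfSub, dif_pos hcard, nuMat_sq]
  · rw [← rdet_submatrix _ ((enumEquiv he hS).trans (S.orderIsoOfFin rfl).toEquiv.symm)
      ((enumEquiv hf hT).trans (T.orderIsoOfFin hcard.symm).toEquiv.symm)]
    congr 1
    ext1 p q
    have hp : ∀ k, ((enumEquiv he hS k : {p // p ∈ S}) : Fin n) = e k := fun _ => rfl
    have hq : ∀ k, ((enumEquiv hf hT k : {p // p ∈ T}) : Fin n) = f k := fun _ => rfl
    rw [Matrix.submatrix_apply, Matrix.submatrix_apply, ← hp, ← hq]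
    simp only [Matrix.of_apply, Equiv.trans_apply]
    erw [OrderIso.apply_symm_apply, OrderIso.apply_symm_apply]
  · exact hA.submatrix (g := fun p => (S.orderIsoOfFin rfl p : Fin n))
      (h := fun p => (T.orderIsoOfFin hcard.symm p : Fin n))
      (Subtype.val_injective.comp (S.orderIsoOfFin rfl).injective)
      (Subtype.val_injective.comp (T.orderIsoOfFin hcard.symm).injective)

/-- `U` is a two-sided inverse of the submatrix of `A` on rows `S` and columns `T`; entries of
`U` outside `T × S` are irrelevant. -/
def IsInvOn {n : ℕ} (A : Matrix (Fin n) (Fin n) R) (S T : Finset (Fin n))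
    (U : Fin n → Fin n → R) : Prop :=
  (∀ p ∈ S, ∀ p' ∈ S, ∑ q ∈ T, A p q * U q p' = if p = p' then 1 else 0) ∧
  (∀ q ∈ T, ∀ q' ∈ T, ∑ p ∈ S, U q p * A p q' = if q = q' then 1 else 0)

lemma Generic.exists_isInvOn {n : ℕ} {A : Matrix (Fin n) (Fin n) R} (hA : Generic A)
    {S T : Finset (Fin n)} (h : S.card = T.card) : ∃ U, IsInvOn A S T U := by
  obtain ⟨B, h1, h2⟩ := hA S T h
  refine ⟨fun q p => if h : q ∈ T ∧ p ∈ S then B ⟨q, h.1⟩ ⟨p, h.2⟩ else 0, ?_, ?_⟩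
  · intro p hp p' hp'
    have := congrFun (congrFun h1 ⟨p, hp⟩) ⟨p', hp'⟩
    rw [Matrix.mul_apply, Matrix.one_apply] at this
    simp only [Subtype.mk.injEq] at this
    rw [← this, ← Finset.sum_coe_sort]
    simp [hp']
  · intro q hq q' hq'
    have := congrFun (congrFun h2 ⟨q, hq⟩) ⟨q', hq'⟩
    rw [Matrix.mul_apply, Matrix.one_apply] at this
    simp only [Subtype.mk.injEq] at this
    rw [← this, ← Finset.sum_coe_sort]
    simp [hq]

/-- The quasideterminant `|A_{S ∪ i, T ∪ j}|_{ij}` computed with an inverse `U` of `A_{S,T}`. -/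
def qd {n : ℕ} (A : Matrix (Fin n) (Fin n) R) (U : Fin n → Fin n → R) (S T : Finset (Fin n))
    (i j : Fin n) : R :=
  A i j - ∑ p ∈ S, ∑ q ∈ T, A i q * U q p * A p j

/-- `ν(C) = ν(|C|_{ij}) ν(C^{ij})` for every position `(i, j)`, not only the top left one. -/
lemma nuOfSub_eq_mul {n : ℕ} {A : Matrix (Fin n) (Fin n) ℍ[ℝ]} (hA : Generic A)
    {S T : Finset (Fin n)} (h : S.card = T.card) {i j : Fin n} (hi : i ∈ S) (hj : j ∈ T)
    {W : Fin n → Fin n → ℍ[ℝ]} (hW : IsInvOn A (S.erase i) (T.erase j) W) :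
    nuOfSub A S T = Quaternion.normSq (qd A W (S.erase i) (T.erase j) i j) *
      nuOfSub A (S.erase i) (T.erase j) := by
  set S' := S.erase i with hS'
  set T' := T.erase j with hT'
  have hc : T'.card = S'.card := by
    rw [hS', hT', Finset.card_erase_of_mem hi, Finset.card_erase_of_mem hj, h]
  let e : Fin S'.card → Fin n := S'.orderEmbOfFin rfl
  let f : Fin S'.card → Fin n := T'.orderEmbOfFin hc
  have he : Function.Injective e := (S'.orderEmbOfFin rfl).injective
  have hf : Function.Injective f := (T'.orderEmbOfFin hc).injective
  have heS : ∀ p, p ∈ S' ↔ ∃ k, e k = p := fun p => by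
    have := Finset.range_orderEmbOfFin S' rfl
    rw [← Finset.mem_coe, ← this]; rfl
  have hfT : ∀ p, p ∈ T' ↔ ∃ k, f k = p := fun p => by
    have := Finset.range_orderEmbOfFin T' hc
    rw [← Finset.mem_coe, ← this]; rfl
  have sumE : ∀ F : Fin n → ℍ[ℝ], ∑ s, F (e s) = ∑ p ∈ S', F p := fun F => by
    rw [← Finset.sum_coe_sort S' F, ← Equiv.sum_comp (enumEquiv he heS)]; rfl
  have sumF : ∀ F : Fin n → ℍ[ℝ], ∑ s, F (f s) = ∑ p ∈ T', F p := fun F => by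
    rw [← Finset.sum_coe_sort T' F, ← Equiv.sum_comp (enumEquiv hf hfT)]; rfl
  let e' : Unit ⊕ Fin S'.card → Fin n := Sum.elim (fun _ => i) e
  let f' : Unit ⊕ Fin S'.card → Fin n := Sum.elim (fun _ => j) f
  have hei : ∀ s, e s ≠ i := fun s => Finset.ne_of_mem_erase ((heS _).2 ⟨s, rfl⟩)
  have hfj : ∀ s, f s ≠ j := fun s => Finset.ne_of_mem_erase ((hfT _).2 ⟨s, rfl⟩)
  have he' : Function.Injective e' :=
    Function.Injective.sumElim (fun _ _ _ => rfl) he fun _ s hs => hei s hs.symm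
  have hf' : Function.Injective f' :=
    Function.Injective.sumElim (fun _ _ _ => rfl) hf fun _ s hs => hfj s hs.symm
  have heS' : ∀ p, p ∈ S ↔ ∃ k, e' k = p := fun p => by
    rw [← Finset.insert_erase hi, Finset.mem_insert, ← hS', heS, Sum.exists]
    simp [e', eq_comm]
  have hfT' : ∀ p, p ∈ T ↔ ∃ k, f' k = p := fun p => by
    rw [← Finset.insert_erase hj, Finset.mem_insert, ← hT', hfT, Sum.exists]
    simp [f', eq_comm]
  have h1 : (A.submatrix e f) * (Matrix.of fun t s => W (f t) (e s)) = 1 := by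
    ext1 s s'
    rw [Matrix.mul_apply, Matrix.one_apply]
    refine (sumF fun q => A (e s) q * W q (e s')).trans ?_
    rw [hW.1 _ ((heS _).2 ⟨s, rfl⟩) _ ((heS _).2 ⟨s', rfl⟩)]
    simp only [he.eq_iff]
  have h2 : (Matrix.of fun t s => W (f t) (e s)) * (A.submatrix e f) = 1 := by
    ext1 s s'
    rw [Matrix.mul_apply, Matrix.one_apply]
    refine (sumE fun q => W (f s) q * A q (f s')).trans ?_
    rw [hW.2 _ ((hfT _).2 ⟨s, rfl⟩) _ ((hfT _).2 ⟨s', rfl⟩)]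
    simp only [hf.eq_iff]
  have hs := rdet_schur (A.submatrix e' f') _ h1 h2
  have hb : (A.submatrix e' f').toBlocks₂₂ = A.submatrix e f := rfl
  rw [hb, ← nuOfSub_sq A hA.emb S T e' f' he' hf' heS' hfT',
    ← nuOfSub_sq A hA.emb S' T' e f he hf heS hfT, ← mul_pow] at hs
  have hq : qd A W S' T' i j = (A.submatrix e' f') (.inl ()) (.inl ()) -
        ∑ p, ∑ q, (A.submatrix e' f') (.inl ()) (.inr q) *
          (Matrix.of fun t s => W (f t) (e s)) q p * (A.submatrix e' f') (.inr p) (.inl ()) := by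
    rw [qd, ← sumE]
    simp only [← sumF]
    rfl
  rw [← hq] at hs
  exact (pow_left_inj₀ (nuOfSub_nonneg _ _ _)
    (mul_nonneg Quaternion.normSq_nonneg (nuOfSub_nonneg _ _ _)) two_ne_zero).1 hs

/-! ### A Cramer-type identity -/

/-- The row vector `w = (1, -r N⁻¹)` annihilates every column of `A_{S,T}` except `q₀`, hence is
a left multiple of row `q₀` of the inverse `U`. -/
lemma qd_eq_mul {n : ℕ} {A : Matrix (Fin n) (Fin n) R} {S T : Finset (Fin n)}
    {U W : Fin n → Fin n → R} (hU : IsInvOn A S T U) {i q₀ : Fin n} (hi : i ∈ S) (hq : q₀ ∈ T)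
    (hW : IsInvOn A (S.erase i) (T.erase q₀) W) :
    qd A W (S.erase i) (T.erase q₀) i q₀ * U q₀ i = 1 ∧
    ∀ j, qd A W (S.erase i) (T.erase q₀) i j =
      qd A W (S.erase i) (T.erase q₀) i q₀ * ∑ p ∈ S, U q₀ p * A p j := by
  obtain ⟨w, hwi, hw⟩ : ∃ w : Fin n → R, w i = 1 ∧
      ∀ p ∈ S.erase i, w p = -∑ q ∈ T.erase q₀, A i q * W q p :=
    ⟨fun p => if p = i then 1 else -∑ q ∈ T.erase q₀, A i q * W q p, by simp,
      fun p hp => by simp [Finset.ne_of_mem_erase hp]⟩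
  have hwA : ∀ c, ∑ p ∈ S, w p * A p c = qd A W (S.erase i) (T.erase q₀) i c := by
    intro c
    rw [← Finset.add_sum_erase _ _ hi, hwi, one_mul, qd, sub_eq_add_neg, ← Finset.sum_neg_distrib]
    congr 1
    refine Finset.sum_congr rfl fun p hp => ?_
    rw [hw p hp, neg_mul, Finset.sum_mul]
  have hzero : ∀ c ∈ T.erase q₀, qd A W (S.erase i) (T.erase q₀) i c = 0 := by
    intro c hc
    rw [qd, sub_eq_zero, Finset.sum_comm]
    simp only [mul_assoc, ← Finset.mul_sum]
    rw [Finset.sum_congr rfl fun q hq' => by rw [hW.2 q hq' c hc]]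
    simp [Finset.mem_erase.1 hc]
  have hwU : ∀ p' ∈ S, w p' = qd A W (S.erase i) (T.erase q₀) i q₀ * U q₀ p' := by
    intro p' hp'
    calc w p' = ∑ p ∈ S, w p * ∑ q ∈ T, A p q * U q p' := by
          rw [Finset.sum_congr rfl fun p hp => by rw [hU.1 p hp p' hp']]
          simp [hp']
      _ = ∑ q ∈ T, (∑ p ∈ S, w p * A p q) * U q p' := by
          simp only [Finset.mul_sum, Finset.sum_mul, mul_assoc]
          exact Finset.sum_comm
      _ = _ := by
          simp only [hwA]
          rw [← Finset.add_sum_erase _ _ hq, Finset.sum_eq_zero, add_zero]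
          intro q hq'
          rw [hzero q hq', zero_mul]
  refine ⟨by rw [← hwU i hi, hwi], fun j => ?_⟩
  rw [← hwA j, Finset.mul_sum]
  refine Finset.sum_congr rfl fun p hp => ?_
  rw [hwU p hp, mul_assoc]

/-- Since `|A_{S,T}|_{i q₀} = (U q₀ i)⁻¹`, multiplying by its norm turns the inverse of `U q₀ i`
into a conjugate. -/
lemma nu_mul_qd {n : ℕ} {A : Matrix (Fin n) (Fin n) ℍ[ℝ]} (hA : Generic A)
    {S T : Finset (Fin n)} (h : S.card = T.card) {U W : Fin n → Fin n → ℍ[ℝ]}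
    (hU : IsInvOn A S T U) {i q₀ : Fin n} (hi : i ∈ S) (hq : q₀ ∈ T)
    (hW : IsInvOn A (S.erase i) (T.erase q₀) W) (j : Fin n) :
    (↑(nuOfSub A (S.erase i) (T.erase q₀)) : ℍ[ℝ]) * qd A W (S.erase i) (T.erase q₀) i j =
      star (U q₀ i) * (↑(nuOfSub A S T) * ∑ p ∈ S, U q₀ p * A p j) := by
  obtain ⟨h1, h2⟩ := qd_eq_mul hU hi hq hW
  rw [h2 j, nuOfSub_eq_mul hA h hi hq hW, ← mul_assoc, ← mul_assoc]
  congr 1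
  set x := qd A W (S.erase i) (T.erase q₀) i q₀
  set y := U q₀ i
  have h3 : star y * star x = 1 := by rw [← star_mul, h1, star_one]
  rw [Quaternion.coe_mul, ← Quaternion.star_mul_self, mul_assoc, ← mul_assoc (star y),
    h3, one_mul, Quaternion.coe_commutes]

/-- Cramer's rule: the row `q₀` of `ν(A_{S,T}) A_{S,T}⁻¹ c`, where `c` is column `j` of `A`. -/
lemma cramer_sum {n : ℕ} {A : Matrix (Fin n) (Fin n) ℍ[ℝ]} (hA : Generic A)
    {S T : Finset (Fin n)} (h : S.card = T.card) {U : Fin n → Fin n → ℍ[ℝ]}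
    (hU : IsInvOn A S T U) {q₀ : Fin n} (hq : q₀ ∈ T) (W : Fin n → Fin n → Fin n → ℍ[ℝ])
    (hW : ∀ i ∈ S, IsInvOn A (S.erase i) (T.erase q₀) (W i)) (j : Fin n) :
    ∑ i ∈ S, star (A i q₀) * ((↑(nuOfSub A (S.erase i) (T.erase q₀)) : ℍ[ℝ]) *
        qd A (W i) (S.erase i) (T.erase q₀) i j) =
      ↑(nuOfSub A S T) * ∑ p ∈ S, U q₀ p * A p j := by
  rw [Finset.sum_congr rfl fun i hi => by
    rw [nu_mul_qd hA h hU hi hq (hW i hi) j, ← mul_assoc, ← star_mul]]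
  rw [← Finset.sum_mul, ← star_sum, hU.2 q₀ hq q₀ hq]
  simp

/-! ### Double permanents as sums over alternating paths -/

/-- The monomial `a_{i q₁} ā_{p₁ q₁} a_{p₁ q₂} ā_{p₂ q₂} ⋯ a_{p_k j}` of the alternating path from
row `i` to column `j` through the rows `p` and the columns `q`. -/
noncomputable def pathMono {n : ℕ} (A : Matrix (Fin n) (Fin n) ℍ[ℝ]) (j : Fin n) :
    Fin n → List (Fin n) → List (Fin n) → ℍ[ℝ]
  | i, p :: L, q :: L' => A i q * star (A p q) * pathMono A j p L L'
  | i, _, _ => A i j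

/-- All orderings of a finset. -/
noncomputable def orderings {I : Type*} [DecidableEq I] (S : Finset I) : Finset (List I) :=
  S.toList.permutations.toFinset

lemma mem_orderings {I : Type*} [DecidableEq I] {S : Finset I} {L : List I} :
    L ∈ orderings S ↔ L.Nodup ∧ L.toFinset = S := by
  rw [orderings, List.mem_toFinset, List.mem_permutations]
  constructor
  · intro h
    refine ⟨h.nodup_iff.2 S.nodup_toList, ?_⟩
    rw [List.toFinset_eq_of_perm _ _ h, Finset.toList_toFinset]
  · rintro ⟨h1, rfl⟩
    exact (List.toFinset_toList h1).symm

lemma orderings_length {I : Type*} [DecidableEq I] {S : Finset I} {L : List I}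
    (h : L ∈ orderings S) : L.length = S.card := by
  obtain ⟨h1, rfl⟩ := mem_orderings.1 h
  exact (List.toFinset_card_of_nodup h1).symm

lemma cons_mem_orderings {I : Type*} [DecidableEq I] {S : Finset I} {p : I} {L : List I} :
    p :: L ∈ orderings S ↔ p ∈ S ∧ L ∈ orderings (S.erase p) := by
  simp only [mem_orderings, List.nodup_cons, List.toFinset_cons]
  constructor
  · rintro ⟨⟨h1, h2⟩, rfl⟩
    exact ⟨Finset.mem_insert_self _ _, h2,
      (Finset.erase_insert (by simpa using h1)).symm⟩
  · rintro ⟨hp, h2, h3⟩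
    refine ⟨⟨fun h => ?_, h2⟩, by rw [h3, Finset.insert_erase hp]⟩
    rw [← List.mem_toFinset, h3] at h
    exact Finset.notMem_erase _ _ h

lemma orderings_empty {I : Type*} [DecidableEq I] : orderings (∅ : Finset I) = {[]} := by
  ext L
  rw [mem_orderings, Finset.mem_singleton, List.toFinset_eq_empty_iff]
  constructor
  · exact fun h => h.2
  · rintro rfl
    simp

lemma sum_orderings {I : Type*} [DecidableEq I] {S : Finset I} (hS : S.Nonempty)
    (F : List I → ℍ[ℝ]) :
    ∑ L ∈ orderings S, F L = ∑ p ∈ S, ∑ L ∈ orderings (S.erase p), F (p :: L) := by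
  rw [Finset.sum_sigma']
  symm
  refine Finset.sum_bij (fun x _ => x.1 :: x.2) ?_ ?_ ?_ (fun _ _ => rfl)
  · rintro ⟨p, L⟩ h
    exact cons_mem_orderings.2 (Finset.mem_sigma.1 h)
  · rintro ⟨p, L⟩ _ ⟨p', L'⟩ _ h
    simp only [List.cons.injEq] at h
    obtain ⟨rfl, rfl⟩ := h
    rfl
  · rintro (_ | ⟨p, L⟩) h
    · exact absurd (mem_orderings.1 h).2 (by simpa using hS.ne_empty.symm)
    · exact ⟨⟨p, L⟩, Finset.mem_sigma.2 (cons_mem_orderings.1 h), rfl⟩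

/-- The orderings of `S` with first element `i` are `i` followed by an ordering of `S \ {i}`. -/
lemma list_sum_filter_head {I : Type*} [DecidableEq I] {S : Finset I} {i : I} (hi : i ∈ S)
    (F : List I → ℍ[ℝ]) :
    ((S.toList.permutations.filter (fun L => L.head? = some i)).map F).sum =
      ∑ L ∈ orderings (S.erase i), F (i :: L) := by
  have hnd : (S.toList.permutations.filter (fun L => L.head? = some i)).Nodup :=
    (List.nodup_permutations _ S.nodup_toList).filter _
  rw [← List.sum_toFinset _ hnd]
  symm
  refine Finset.sum_bij (fun L _ => i :: L) ?_ ?_ ?_ (fun _ _ => rfl)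
  · intro L h
    have := cons_mem_orderings.2 ⟨hi, h⟩
    rw [orderings, List.mem_toFinset] at this
    simpa using this
  · intro L _ L' _ h
    exact (List.cons.inj h).2
  · intro L h
    rw [List.mem_toFinset, List.mem_filter] at h
    obtain ⟨h1, h2⟩ := h
    rcases L with _ | ⟨p, L⟩
    · simp at h2
    · obtain rfl : p = i := by simpa using h2
      rw [← List.mem_toFinset] at h1
      exact ⟨L, (cons_mem_orderings.1 h1).2, rfl⟩

/-- The default value `d` is never reached, because all list accesses are in range. -/
lemma listMono_eq {n : ℕ} (A : Matrix (Fin n) (Fin n) ℍ[ℝ]) (j : Fin n) (L : List (Fin n)) :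
    ∀ (L' : List (Fin n)) (i d : Fin n), L.length = L'.length →
      listMono A d j (i :: L) (j :: L') = pathMono A j i L L' := by
  induction L with
  | nil => intro L' i d _; simp [listMono, pathMono]
  | cons p L ih =>
    rintro (_ | ⟨q, L'⟩) i d h
    · simp at h
    · rw [pathMono, ← ih L' p d (by simpa using h)]
      simp only [listMono, List.length_cons, Nat.add_sub_cancel, List.range_succ_eq_map,
        List.map_cons, List.prod_cons, List.map_map, mul_assoc]
      simp [Function.comp_def]

/-- The sum of the monomials of all alternating paths from row `i` to column `j` with
intermediate rows `S` and intermediate columns `T`. -/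
noncomputable def pathSum {n : ℕ} (A : Matrix (Fin n) (Fin n) ℍ[ℝ]) (j i : Fin n)
    (S T : Finset (Fin n)) : ℍ[ℝ] :=
  ∑ L ∈ orderings S, ∑ L' ∈ orderings T, pathMono A j i L L'

lemma dperm_eq {n : ℕ} (A : Matrix (Fin n) (Fin n) ℍ[ℝ]) {i j : Fin n} {S T : Finset (Fin n)}
    (hi : i ∈ S) (hj : j ∈ T) (h : S.card = T.card) :
    dperm A i j S T = pathSum A j i (S.erase i) (T.erase j) := by
  rw [dperm, list_sum_filter_head hi, pathSum]
  refine Finset.sum_congr rfl fun L hL => ?_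
  rw [list_sum_filter_head hj]
  refine Finset.sum_congr rfl fun L' hL' => listMono_eq A j L L' i i ?_
  rw [orderings_length hL, orderings_length hL', Finset.card_erase_of_mem hi,
    Finset.card_erase_of_mem hj, h]

lemma pathSum_empty {n : ℕ} (A : Matrix (Fin n) (Fin n) ℍ[ℝ]) (j i : Fin n) :
    pathSum A j i ∅ ∅ = A i j := by
  simp [pathSum, orderings_empty, pathMono]

/-- Splitting off the first two steps `i → q → p` of the paths. -/
lemma pathSum_step {n : ℕ} (A : Matrix (Fin n) (Fin n) ℍ[ℝ]) (j i : Fin n)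
    {S T : Finset (Fin n)} (hS : S.Nonempty) (hT : T.Nonempty) :
    pathSum A j i S T = ∑ p ∈ S, ∑ q ∈ T,
      A i q * star (A p q) * pathSum A j p (S.erase p) (T.erase q) := by
  rw [pathSum, sum_orderings hS]
  refine Finset.sum_congr rfl fun p _ => ?_
  simp only [sum_orderings hT, pathMono, pathSum, Finset.mul_sum]
  exact Finset.sum_comm

/-! ### The expansion -/

/-- Choosing a subset and then a point in it amounts to choosing the point first. -/
lemma sum_powerset_erase {I : Type*} [DecidableEq I] (S : Finset I) (F : I → Finset I → ℍ[ℝ]) :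
    ∑ S' ∈ S.powerset, ∑ x ∈ S', F x (S'.erase x) =
      ∑ x ∈ S, ∑ S' ∈ (S.erase x).powerset, F x S' := by
  rw [Finset.sum_sigma', Finset.sum_sigma']
  refine Finset.sum_bij' (fun y _ => ⟨y.2, y.1.erase y.2⟩) (fun y _ => ⟨insert y.1 y.2, y.1⟩)
    ?_ ?_ ?_ ?_ ?_
  · rintro ⟨S', x⟩ h
    simp only [Finset.mem_sigma, Finset.mem_powerset] at h ⊢
    exact ⟨h.1 h.2, Finset.erase_subset_erase _ h.1⟩
  · rintro ⟨x, S'⟩ h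
    simp only [Finset.mem_sigma, Finset.mem_powerset] at h ⊢
    exact ⟨Finset.insert_subset h.1 (h.2.trans (Finset.erase_subset _ _)),
      Finset.mem_insert_self _ _⟩
  · rintro ⟨S', x⟩ h
    simp only [Finset.mem_sigma, Finset.mem_powerset] at h
    simp [Finset.insert_erase h.2]
  · rintro ⟨x, S'⟩ h
    simp only [Finset.mem_sigma, Finset.mem_powerset] at h
    have : x ∉ S' := fun hx => Finset.notMem_erase _ _ (h.2 hx)
    simp [Finset.erase_insert this]
  · intro _ _; rfl

lemma sdiff_eq_erase_sdiff_erase {I : Type*} [DecidableEq I] {S S' : Finset I} {p : I}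
    (hp : p ∈ S') : S \ S' = S.erase p \ S'.erase p := by
  ext x
  simp only [Finset.mem_sdiff, Finset.mem_erase]
  by_cases hx : x = p
  · subst hx; simp [hp]
  · simp [hx]

/-- The term of the expansion of `ν(A_{S,T}) |A_{S ∪ i, T ∪ j}|_{ij}` belonging to the
intermediate rows `S'` and columns `T'`. -/
noncomputable def expTerm {n : ℕ} (A : Matrix (Fin n) (Fin n) ℍ[ℝ]) (j i : Fin n)
    (S T S' T' : Finset (Fin n)) : ℍ[ℝ] :=
  if S'.card = T'.card then
    (-1 : ℍ[ℝ]) ^ S'.card * (↑(nuOfSub A (S \ S') (T \ T')) : ℍ[ℝ]) * pathSum A j i S' T'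
  else 0

lemma expTerm_step {n : ℕ} (A : Matrix (Fin n) (Fin n) ℍ[ℝ]) (j i : Fin n)
    (S T S' T' : Finset (Fin n)) :
    expTerm A j i S T S' T' =
      (if S' = ∅ then if T' = ∅ then (↑(nuOfSub A S T) : ℍ[ℝ]) * A i j else 0 else 0) -
      ∑ p ∈ S', ∑ q ∈ T', A i q * (star (A p q) *
        expTerm A j p (S.erase p) (T.erase q) (S'.erase p) (T'.erase q)) := by
  rcases S'.eq_empty_or_nonempty with rfl | hS
  · rcases T'.eq_empty_or_nonempty with rfl | hT
    · simp [expTerm, pathSum_empty]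
    · have : T'.card ≠ 0 := hT.card_pos.ne'
      simp [expTerm, hT.ne_empty, this.symm]
  · rcases T'.eq_empty_or_nonempty with rfl | hT
    · have : S'.card ≠ 0 := hS.card_pos.ne'
      simp [expTerm, hS.ne_empty]
    · rw [if_neg hS.ne_empty, zero_sub, expTerm, pathSum_step A j i hS hT]
      have hS0 := hS.card_pos
      have hT0 := hT.card_pos
      split_ifs with hc
      · simp only [Finset.mul_sum, ← Finset.sum_neg_distrib]
        refine Finset.sum_congr rfl fun p hp => Finset.sum_congr rfl fun q hq => ?_
        have hc' : (S'.erase p).card = (T'.erase q).card := by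
          rw [Finset.card_erase_of_mem hp, Finset.card_erase_of_mem hq, hc]
        have hS1 : S'.card = (S'.erase p).card + 1 := (Finset.card_erase_add_one hp).symm
        rw [expTerm, if_pos hc', ← sdiff_eq_erase_sdiff_erase hp, ← sdiff_eq_erase_sdiff_erase hq,
          hS1, pow_succ]
        have hcomm : ∀ x : ℍ[ℝ], Commute x ((-1 : ℍ[ℝ]) ^ (S'.erase p).card *
            (↑(nuOfSub A (S \ S') (T \ T')) : ℍ[ℝ])) := fun x =>
          ((Commute.neg_one_right x).pow_right _).mul_right (Quaternion.coe_commute _ x).symm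
        have := (hcomm (A i q * star (A p q))).eq
        rw [← mul_assoc (star (A p q)), ← mul_assoc (A i q), ← mul_assoc (A i q), this]
        simp only [mul_neg, neg_mul, mul_one, mul_assoc]
      · symm
        rw [neg_eq_zero]
        refine Finset.sum_eq_zero fun p hp => Finset.sum_eq_zero fun q hq => ?_
        have hc' : ¬ (S'.erase p).card = (T'.erase q).card := by
          rw [Finset.card_erase_of_mem hp, Finset.card_erase_of_mem hq]
          omega
        rw [expTerm, if_neg hc']
        simp

/-- The expansion for all submatrices, by induction on their order: the first two steps of the
paths are split off, the remaining sums are evaluated inductively, and `cramer_sum` adds them up. -/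
lemma nu_mul_qd_eq_sum {n : ℕ} {A : Matrix (Fin n) (Fin n) ℍ[ℝ]} (hA : Generic A) (j : Fin n)
    (k : ℕ) : ∀ (S T : Finset (Fin n)) (_ : S.card = k) (_ : T.card = k)
      (U : Fin n → Fin n → ℍ[ℝ]) (_ : IsInvOn A S T U) (i : Fin n),
      (↑(nuOfSub A S T) : ℍ[ℝ]) * qd A U S T i j =
        ∑ S' ∈ S.powerset, ∑ T' ∈ T.powerset, expTerm A j i S T S' T' := by
  induction k with
  | zero =>
    intro S T hS hT U hU i
    rw [Finset.card_eq_zero] at hS hT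
    subst hS hT
    simp [qd, expTerm, pathSum_empty]
  | succ k ih =>
    intro S T hS hT U hU i
    have hex : ∀ p q, ∃ W, p ∈ S → q ∈ T → IsInvOn A (S.erase p) (T.erase q) W := by
      intro p q
      by_cases h : p ∈ S ∧ q ∈ T
      · obtain ⟨W, hW⟩ := hA.exists_isInvOn (S := S.erase p) (T := T.erase q)
          (by rw [Finset.card_erase_of_mem h.1, Finset.card_erase_of_mem h.2, hS, hT])
        exact ⟨W, fun _ _ => hW⟩
      · exact ⟨0, fun h1 h2 => absurd ⟨h1, h2⟩ h⟩
    choose W hW using hex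
    have hrhs : ∑ S' ∈ S.powerset, ∑ T' ∈ T.powerset, expTerm A j i S T S' T' =
        (↑(nuOfSub A S T) : ℍ[ℝ]) * A i j - ∑ p ∈ S, ∑ q ∈ T, A i q * (star (A p q) *
          ∑ S' ∈ (S.erase p).powerset, ∑ T' ∈ (T.erase q).powerset,
            expTerm A j p (S.erase p) (T.erase q) S' T') := by
      simp only [expTerm_step A j i S T, Finset.sum_sub_distrib]
      congr 1
      · rw [Finset.sum_eq_single ∅, Finset.sum_eq_single ∅]
        · simp
        · intro b _ hb; simp [hb]
        · intro h; exact absurd (Finset.empty_mem_powerset _) h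
        · intro b _ hb; simp [hb]
        · intro h; exact absurd (Finset.empty_mem_powerset _) h
      · calc _ = ∑ S' ∈ S.powerset, ∑ p ∈ S', ∑ T' ∈ T.powerset, ∑ q ∈ T',
              A i q * (star (A p q) *
                expTerm A j p (S.erase p) (T.erase q) (S'.erase p) (T'.erase q)) :=
              Finset.sum_congr rfl fun _ _ => Finset.sum_comm
          _ = ∑ p ∈ S, ∑ S' ∈ (S.erase p).powerset, ∑ T' ∈ T.powerset, ∑ q ∈ T',
              A i q * (star (A p q) *
                expTerm A j p (S.erase p) (T.erase q) S' (T'.erase q)) :=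
              sum_powerset_erase S fun p S' => ∑ T' ∈ T.powerset, ∑ q ∈ T',
                A i q * (star (A p q) *
                  expTerm A j p (S.erase p) (T.erase q) S' (T'.erase q))
          _ = _ := by
              refine Finset.sum_congr rfl fun p _ => ?_
              simp only [Finset.mul_sum]
              refine Eq.trans ?_ Finset.sum_comm
              refine Finset.sum_congr rfl fun S' _ => ?_
              exact sum_powerset_erase T fun q T' => A i q * (star (A p q) *
                expTerm A j p (S.erase p) (T.erase q) S' T')
    rw [hrhs, qd, mul_sub]
    congr 1
    rw [Finset.sum_comm, Finset.sum_comm (s := S) (t := T), Finset.mul_sum]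
    refine Finset.sum_congr rfl fun q hq => ?_
    have hcr := cramer_sum hA (hS.trans hT.symm) hU hq (fun p => W p q)
      (fun p hp => hW p q hp hq) j
    calc _ = A i q * (↑(nuOfSub A S T) * ∑ p ∈ S, U q p * A p j) := by
          rw [← mul_assoc, ← Quaternion.coe_commutes, mul_assoc]
          simp only [Finset.mul_sum, mul_assoc]
      _ = _ := by
          rw [← hcr, Finset.mul_sum]
          refine Finset.sum_congr rfl fun p hp => ?_
          rw [ih _ _ (by rw [Finset.card_erase_of_mem hp, hS]; rfl)
            (by rw [Finset.card_erase_of_mem hq, hT]; rfl) _ (hW p q hp hq) p]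

lemma qdet_eq_qd {n : ℕ} {A : Matrix (Fin n) (Fin n) R} {i j : Fin n} {U : Fin n → Fin n → R}
    (hU : IsInvOn A (Finset.univ.erase i) (Finset.univ.erase j) U) :
    qdet A i j = qd A U (Finset.univ.erase i) (Finset.univ.erase j) i j := by
  have sumS : ∀ (k : Fin n) (F : Fin n → R),
      ∑ p : {p : Fin n // p ≠ k}, F p = ∑ p ∈ Finset.univ.erase k, F p := fun k F =>
    (Finset.sum_subtype _ (by simp) F).symm
  have hcard : Fintype.card {p : Fin n // p ≠ i} = Fintype.card {q : Fin n // q ≠ j} := by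
    simp
  let f : {p : Fin n // p ≠ i} ≃ {q : Fin n // q ≠ j} := Fintype.equivOfCardEq hcard
  have sumF : ∀ F : Fin n → R,
      ∑ p : {p : Fin n // p ≠ i}, F (f p) = ∑ q ∈ Finset.univ.erase j, F q := fun F => by
    rw [← sumS, ← Equiv.sum_comp f]
  have hm : ∀ (k : Fin n) (p : {p : Fin n // p ≠ k}), (p : Fin n) ∈ Finset.univ.erase k :=
    fun k p => Finset.mem_erase.2 ⟨p.2, Finset.mem_univ _⟩
  rw [qdet_eq A i j (Equiv.refl _) f (Matrix.of fun t s => U (f t) s), qd, ← sumS]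
  · simp only [← sumF]
    rfl
  · ext1 s s'
    rw [Matrix.mul_apply, Matrix.one_apply]
    refine (sumF fun q => A s q * U q s').trans ?_
    rw [hU.1 _ (hm i s) _ (hm i s')]
    simp only [Subtype.ext_iff]
  · ext1 s s'
    rw [Matrix.mul_apply, Matrix.one_apply]
    refine (sumS i fun p => U (f s) p * A p (f s')).trans ?_
    rw [hU.2 _ (hm j _) _ (hm j _)]
    simp only [← Subtype.ext_iff, f.injective.eq_iff]

/-- Finsets containing `i` correspond to subsets of the complement of `i`. -/
lemma sum_mem_eq {n : ℕ} (i : Fin n) (F : Finset (Fin n) → ℍ[ℝ]) (hF : ∀ S, i ∉ S → F S = 0) :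
    ∑ S : Finset (Fin n), F S = ∑ S' ∈ (Finset.univ.erase i).powerset, F (insert i S') := by
  have hsub : ∑ S ∈ Finset.univ.filter (fun S : Finset (Fin n) => i ∈ S), F S =
      ∑ S : Finset (Fin n), F S :=
    Finset.sum_subset (Finset.filter_subset _ _) fun S _ hS => hF S (by simpa using hS)
  rw [← hsub]
  symm
  refine Finset.sum_bij' (fun S' _ => insert i S') (fun S _ => S.erase i) ?_ ?_ ?_ ?_ ?_
  · intro S _; simp
  · intro S _
    exact Finset.mem_powerset.2 (Finset.erase_subset_erase _ (Finset.subset_univ _))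
  · intro S hS
    exact Finset.erase_insert fun h => Finset.notMem_erase _ _ (Finset.mem_powerset.1 hS h)
  · intro S hS
    exact Finset.insert_erase (by simpa using hS)
  · intro _ _; rfl

/-- `ν(A^{ij}) |A|_{ij} = Σ_B (−1)^{K(B)−1} ν(B^c) π_{ij}(B)`, the sum over all square
submatrices `B` of `A` (given by rows `S ∋ i` and columns `T ∋ j` with `S.card = T.card`)
containing the entry `a_{ij}`. -/
theorem nu_mul_qdet_eq_sum_double_permanents {n : ℕ}
    (A : Matrix (Fin n) (Fin n) ℍ[ℝ]) (hA : Generic A) (i j : Fin n) :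
    (↑(nuOfSub A (Finset.univ.erase i) (Finset.univ.erase j)) : ℍ[ℝ]) * qdet A i j =
      ∑ S : Finset (Fin n), ∑ T : Finset (Fin n),
        if i ∈ S ∧ j ∈ T ∧ S.card = T.card then
          (-1 : ℍ[ℝ]) ^ (S.card - 1) * (↑(nuOfSub A Sᶜ Tᶜ) : ℍ[ℝ]) * dperm A i j S T
        else 0 := by
  have hcard : (Finset.univ.erase i).card = (Finset.univ.erase j).card := by simp
  obtain ⟨U, hU⟩ := hA.exists_isInvOn hcard
  rw [qdet_eq_qd hU, nu_mul_qd_eq_sum hA j _ _ _ rfl hcard.symm U hU i, sum_mem_eq i]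
  · refine Finset.sum_congr rfl fun S' hS' => ?_
    rw [sum_mem_eq j]
    · refine Finset.sum_congr rfl fun T' hT' => ?_
      have hi : i ∉ S' := fun h => Finset.notMem_erase _ _ (Finset.mem_powerset.1 hS' h)
      have hj : j ∉ T' := fun h => Finset.notMem_erase _ _ (Finset.mem_powerset.1 hT' h)
      have hc : ∀ (k : Fin n) (X : Finset (Fin n)), (insert k X)ᶜ = Finset.univ.erase k \ X := by
        intro k X
        ext x
        simp
      rw [expTerm]
      simp only [Finset.mem_insert_self, true_and, Finset.card_insert_of_notMem hi,
        Finset.card_insert_of_notMem hj, Nat.add_right_cancel_iff, Nat.add_sub_cancel, hc]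
      split_ifs with h
      · rw [dperm_eq A (Finset.mem_insert_self _ _) (Finset.mem_insert_self _ _)
          (by rw [Finset.card_insert_of_notMem hi, Finset.card_insert_of_notMem hj, h]),
          Finset.erase_insert hi, Finset.erase_insert hj]
      · rfl
    · intro T hT
      rw [if_neg fun h => hT h.2.1]
  · intro S hS
    exact Finset.sum_eq_zero fun T _ => if_neg fun h => hS h.1
end
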